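/- (Second unicity lemma for Needham–Schroeder–Lowe.) If evs ∈ nsl, Crypt (pubK B) ⟨Nonce NA, Agent A⟩ ∈ parts (spies evs) and Crypt (pubK B') ⟨Nonce NA', Nonce NA, Agent A'⟩ ∈ parts (spies evs), then Nonce NA ∈ analz (spies evs); i.e. the same nonce cannot occur both in first position of an NS1-shaped ciphertext and in second position of an NS2-shaped ciphertext unless it is known to the spy. -/

import Mathlib

inductive agent : Type
  | Server : agent
  | Friend : ℕ → agent
  | Spy : agent
deriving DecidableEq

inductive msg : Type
  | Agent : agent → msg
  | Number : ℕ → msg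
  | Nonce : ℕ → msg
  | Key : ℕ → msg
  | Hash : msg → msg
  | MPair : msg → msg → msg
  | Crypt : ℕ → msg → msg
deriving DecidableEq

inductive partsP (H : Set msg) : msg → Prop
  | Inj : ∀ X, X ∈ H → partsP H X
  | Fst : ∀ X Y, partsP H (msg.MPair X Y) → partsP H X
  | Snd : ∀ X Y, partsP H (msg.MPair X Y) → partsP H Y
  | Body : ∀ K X, partsP H (msg.Crypt K X) → partsP H X

/-- `parts H`: sub-components of messages of `H`. -/
def parts (H : Set msg) : Set msg := {X | partsP H X}

inductive analzP (invKey : ℕ → ℕ) (H : Set msg) : msg → Prop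
  | Inj : ∀ X, X ∈ H → analzP invKey H X
  | Fst : ∀ X Y, analzP invKey H (msg.MPair X Y) → analzP invKey H X
  | Snd : ∀ X Y, analzP invKey H (msg.MPair X Y) → analzP invKey H Y
  | Decrypt : ∀ K X, analzP invKey H (msg.Crypt K X) →
      analzP invKey H (msg.Key (invKey K)) → analzP invKey H X

/-- `analz invKey H`: what can be obtained by decomposing and decrypting messages of `H`. -/
def analz (invKey : ℕ → ℕ) (H : Set msg) : Set msg := {X | analzP invKey H X}

inductive synthP (H : Set msg) : msg → Prop
  | Inj : ∀ X, X ∈ H → synthP H X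
  | Ag : ∀ a, synthP H (msg.Agent a)
  | Num : ∀ n, synthP H (msg.Number n)
  | Hsh : ∀ X, synthP H X → synthP H (msg.Hash X)
  | Pr : ∀ X Y, synthP H X → synthP H Y → synthP H (msg.MPair X Y)
  | Cry : ∀ K X, synthP H X → msg.Key K ∈ H → synthP H (msg.Crypt K X)

/-- `synth H`: messages that can be synthesized from `H`. -/
def synth (H : Set msg) : Set msg := {X | synthP H X}

inductive guardP (invKey : ℕ → ℕ) (n : ℕ) (Ks : Set ℕ) : msg → Prop
  | No_Nonce : ∀ X, msg.Nonce n ∉ parts {X} → guardP invKey n Ks X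
  | Guard : ∀ K X, invKey K ∈ Ks → guardP invKey n Ks (msg.Crypt K X)
  | Cry : ∀ K X, guardP invKey n Ks X → guardP invKey n Ks (msg.Crypt K X)
  | Pr : ∀ X Y, guardP invKey n Ks X → guardP invKey n Ks Y →
      guardP invKey n Ks (msg.MPair X Y)

/-- `guard n Ks`: messages in which `Nonce n` is guarded by the keys of `Ks`. -/
def guardMsg (invKey : ℕ → ℕ) (n : ℕ) (Ks : Set ℕ) : Set msg := {X | guardP invKey n Ks X}

/-- `Guard n Ks H`: every message of `H` lies in `guard n Ks`. -/
def Guard (invKey : ℕ → ℕ) (n : ℕ) (Ks : Set ℕ) (H : Set msg) : Prop :=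
  ∀ X ∈ H, X ∈ guardMsg invKey n Ks
inductive event : Type
  | Says : agent → agent → msg → event
deriving DecidableEq

def msgOf : event → msg
  | event.Says _ _ X => X

/-- Set of messages sent in a trace. -/
def sent (evs : List event) : Set msg :=
  {X | ∃ A B, event.Says A B X ∈ evs}
/-- Private key of an agent: the inverse of its public key. -/
def priK (invKey : ℕ → ℕ) (pubK : agent → ℕ) (A : agent) : ℕ := invKey (pubK A)

/-- Initial knowledge of each agent in a public-key infrastructure:
every agent knows its own private key and all public keys; the spy moreover
knows the private keys of the bad agents. -/
def initStatePK (invKey : ℕ → ℕ) (pubK : agent → ℕ) (bad : Set agent) : agent → Set msg :=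
  fun A =>
    match A with
    | agent.Spy =>
        {X | ∃ B ∈ bad, X = msg.Key (priK invKey pubK B)} ∪ {X | ∃ B, X = msg.Key (pubK B)}
    | _ => {msg.Key (priK invKey pubK A)} ∪ {X | ∃ B, X = msg.Key (pubK B)}

/-- `spies evs`: the private keys of the bad agents, all public keys, and
every message sent in `evs`. -/
def spiesPK (invKey : ℕ → ℕ) (pubK : agent → ℕ) (bad : Set agent) (evs : List event) :
    Set msg :=
  initStatePK invKey pubK bad agent.Spy ∪ sent evs

/-- `used evs`: parts of all agents' initial knowledge and of all messages sent in `evs`. -/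
def usedPK (invKey : ℕ → ℕ) (pubK : agent → ℕ) (bad : Set agent) (evs : List event) :
    Set msg :=
  parts ((⋃ A, initStatePK invKey pubK bad A) ∪ sent evs)
/-- The Needham–Schroeder–Lowe protocol. -/
inductive nsl (invKey : ℕ → ℕ) (pubK : agent → ℕ) (bad : Set agent) : List event → Prop
  | Nil : nsl invKey pubK bad []
  | Fake : ∀ evs B X, nsl invKey pubK bad evs →
      X ∈ synth (analz invKey (spiesPK invKey pubK bad evs)) →
      nsl invKey pubK bad (event.Says agent.Spy B X :: evs)
  | NS1 : ∀ evs A B NA, nsl invKey pubK bad evs →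
      msg.Nonce NA ∉ usedPK invKey pubK bad evs →
      nsl invKey pubK bad
        (event.Says A B (msg.Crypt (pubK B) (msg.MPair (msg.Nonce NA) (msg.Agent A))) :: evs)
  | NS2 : ∀ evs A A' B NA NB, nsl invKey pubK bad evs →
      msg.Nonce NB ∉ usedPK invKey pubK bad evs →
      event.Says A' B (msg.Crypt (pubK B) (msg.MPair (msg.Nonce NA) (msg.Agent A))) ∈ evs →
      nsl invKey pubK bad
        (event.Says B A (msg.Crypt (pubK A)
          (msg.MPair (msg.Nonce NA) (msg.MPair (msg.Nonce NB) (msg.Agent B)))) :: evs)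
  | NS3 : ∀ evs A B B' NA NB, nsl invKey pubK bad evs →
      event.Says A B (msg.Crypt (pubK B) (msg.MPair (msg.Nonce NA) (msg.Agent A))) ∈ evs →
      event.Says B' A (msg.Crypt (pubK A)
        (msg.MPair (msg.Nonce NA) (msg.MPair (msg.Nonce NB) (msg.Agent B)))) ∈ evs →
      nsl invKey pubK bad (event.Says A B (msg.Crypt (pubK B) (msg.Nonce NB)) :: evs)

theorem parts_mono' {G H : Set msg} (h : G ⊆ H) {Y} (hY : partsP G Y) : partsP H Y := by
  induction hY with
  | Inj X hX => exact .Inj _ (h hX)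
  | Fst X Y _ ih => exact .Fst _ _ ih
  | Snd X Y _ ih => exact .Snd _ _ ih
  | Body K X _ ih => exact .Body _ _ ih

theorem analz_mono' {inv : ℕ → ℕ} {G H : Set msg} (h : G ⊆ H) {Y} (hY : analzP inv G Y) :
    analzP inv H Y := by
  induction hY with
  | Inj X hX => exact .Inj _ (h hX)
  | Fst X Y _ ih => exact .Fst _ _ ih
  | Snd X Y _ ih => exact .Snd _ _ ih
  | Decrypt K X _ _ ih ih' => exact .Decrypt _ _ ih ih'

theorem analz_parts' {inv : ℕ → ℕ} {H : Set msg} {Y} (hY : analzP inv H Y) : partsP H Y := by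
  induction hY with
  | Inj X hX => exact .Inj _ hX
  | Fst X Y _ ih => exact .Fst _ _ ih
  | Snd X Y _ ih => exact .Snd _ _ ih
  | Decrypt K X _ _ ih ih' => exact .Body _ _ ih

theorem spies_cons {inv : ℕ → ℕ} {pubK bad A B X evs} {Y}
    (hY : partsP (spiesPK inv pubK bad (event.Says A B X :: evs)) Y) :
    partsP (spiesPK inv pubK bad evs) Y ∨ partsP {X} Y := by
  induction hY with
  | Inj Z hZ =>
    rcases hZ with hZ | ⟨C, D, hZ⟩
    · exact .inl (.Inj _ (.inl hZ))
    · rcases List.mem_cons.1 hZ with hZ | hZ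
      · cases hZ; exact .inr (.Inj _ rfl)
      · exact .inl (.Inj _ (.inr ⟨C, D, hZ⟩))
  | Fst X Y _ ih => exact ih.imp (.Fst _ _) (.Fst _ _)
  | Snd X Y _ ih => exact ih.imp (.Snd _ _) (.Snd _ _)
  | Body K X _ ih => exact ih.imp (.Body _ _) (.Body _ _)

theorem spies_sub {inv : ℕ → ℕ} {pubK bad e evs} :
    spiesPK inv pubK bad evs ⊆ spiesPK inv pubK bad (e :: evs) := by
  rintro Z (hZ | ⟨C, D, hZ⟩)
  · exact .inl hZ
  · exact .inr ⟨C, D, List.mem_cons_of_mem _ hZ⟩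

theorem spies_used {inv : ℕ → ℕ} {pubK bad evs} :
    spiesPK inv pubK bad evs ⊆
      ((⋃ A, initStatePK inv pubK bad A) ∪ sent evs) := by
  rintro Z (hZ | hZ)
  · exact .inl (Set.mem_iUnion.2 ⟨_, hZ⟩)
  · exact .inr hZ

theorem parts_crypt {K X Y} (h : partsP {msg.Crypt K X} Y) :
    Y = msg.Crypt K X ∨ partsP {X} Y := by
  induction h with
  | Inj Z hZ => exact .inl hZ
  | Fst X Y _ ih => exact .inr (.Fst _ _ (ih.resolve_left (by simp)))
  | Snd X Y _ ih => exact .inr (.Snd _ _ (ih.resolve_left (by simp)))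
  | Body K X _ ih =>
    rcases ih with ih | ih
    · cases ih; exact .inr (.Inj _ rfl)
    · exact .inr (.Body _ _ ih)

theorem parts_pair {X1 X2 Y} (h : partsP {msg.MPair X1 X2} Y) :
    Y = msg.MPair X1 X2 ∨ partsP {X1} Y ∨ partsP {X2} Y := by
  induction h with
  | Inj Z hZ => exact .inl hZ
  | Fst X Y _ ih =>
    rcases ih with ih | ih
    · cases ih; exact .inr (.inl (.Inj _ rfl))
    · exact .inr (ih.imp (.Fst _ _) (.Fst _ _))
  | Snd X Y _ ih =>
    rcases ih with ih | ih
    · cases ih; exact .inr (.inr (.Inj _ rfl))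
    · exact .inr (ih.imp (.Snd _ _) (.Snd _ _))
  | Body K X _ ih => exact .inr ((ih.resolve_left (by simp)).imp (.Body _ _) (.Body _ _))

theorem parts_nonce {n Y} (h : partsP {msg.Nonce n} Y) : Y = msg.Nonce n := by
  induction h with
  | Inj Z hZ => exact hZ
  | _ => simp_all

theorem parts_agent {n Y} (h : partsP {msg.Agent n} Y) : Y = msg.Agent n := by
  induction h with
  | Inj Z hZ => exact hZ
  | _ => simp_all

theorem synth_parts {G : Set msg} {X Y} (hX : synthP G X) (h : partsP {X} Y) :
    synthP G Y ∨ partsP G Y := by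
  induction h with
  | Inj Z hZ => cases hZ; exact .inl hX
  | Fst X Y _ ih =>
    rcases ih with ih | ih
    · cases ih with
      | Inj _ h => exact .inr (.Fst _ _ (.Inj _ h))
      | Pr _ _ h h' => exact .inl h
    · exact .inr (.Fst _ _ ih)
  | Snd X Y _ ih =>
    rcases ih with ih | ih
    · cases ih with
      | Inj _ h => exact .inr (.Snd _ _ (.Inj _ h))
      | Pr _ _ h h' => exact .inl h'
    · exact .inr (.Snd _ _ ih)
  | Body K X _ ih =>
    rcases ih with ih | ih
    · cases ih with
      | Inj _ h => exact .inr (.Body _ _ (.Inj _ h))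
      | Cry _ _ h h' => exact .inl h
    · exact .inr (.Body _ _ ih)

theorem parts_analz {inv : ℕ → ℕ} {H : Set msg} {Y} (h : partsP (analz inv H) Y) :
    partsP H Y := by
  induction h with
  | Inj Z hZ => exact analz_parts' hZ
  | Fst X Y _ ih => exact .Fst _ _ ih
  | Snd X Y _ ih => exact .Snd _ _ ih
  | Body K X _ ih => exact .Body _ _ ih

theorem fake_crypt {inv : ℕ → ℕ} {H : Set msg} {X K Z}
    (hX : synthP (analz inv H) X) (h : partsP {X} (msg.Crypt K Z)) :
    partsP H (msg.Crypt K Z) ∨ synthP (analz inv H) Z := by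
  rcases synth_parts hX h with h | h
  · cases h with
    | Inj _ h => exact .inl (analz_parts' h)
    | Cry _ _ h _ => exact .inr h
  · exact .inl (parts_analz h)

theorem synth_fst {inv : ℕ → ℕ} {H : Set msg} {X Y}
    (h : synthP (analz inv H) (msg.MPair X Y)) : synthP (analz inv H) X := by
  cases h with
  | Inj _ h => exact .Inj _ (analzP.Fst _ _ h)
  | Pr _ _ h _ => exact h

theorem synth_snd {inv : ℕ → ℕ} {H : Set msg} {X Y}
    (h : synthP (analz inv H) (msg.MPair X Y)) : synthP (analz inv H) Y := by
  cases h with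
  | Inj _ h => exact .Inj _ (analzP.Snd _ _ h)
  | Pr _ _ _ h => exact h

theorem synth_nonce {G : Set msg} {n} (h : synthP G (msg.Nonce n)) : msg.Nonce n ∈ G := by
  cases h with
  | Inj _ h => exact h

theorem parts_init {inv : ℕ → ℕ} {pubK bad Y} (h : partsP (spiesPK inv pubK bad []) Y) :
    ∃ k, Y = msg.Key k := by
  induction h with
  | Inj Z hZ =>
    rcases hZ with (⟨_, _, h⟩ | ⟨_, h⟩) | ⟨_, _, h⟩
    · exact ⟨_, h⟩
    · exact ⟨_, h⟩
    · simp at h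
  | _ => simp_all

/-- Second unicity lemma for Needham–Schroeder–Lowe. -/
theorem nsl_unicity2
    (invKey : ℕ → ℕ) (pubK : agent → ℕ) (bad : Set agent)
    (hinv : ∀ K, invKey (invKey K) = K)
    (hpub : Function.Injective pubK)
    (hpri : Function.Injective (priK invKey pubK))
    (hpubpri : ∀ A B : agent, pubK A ≠ priK invKey pubK B)
    (hspy : agent.Spy ∈ bad)
    (evs : List event) (A A' B B' : agent) (NA NA' : ℕ)
    (hevs : nsl invKey pubK bad evs)
    (h1 : msg.Crypt (pubK B) (msg.MPair (msg.Nonce NA) (msg.Agent A))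
      ∈ parts (spiesPK invKey pubK bad evs))
    (h2 : msg.Crypt (pubK B') (msg.MPair (msg.Nonce NA') (msg.MPair (msg.Nonce NA) (msg.Agent A')))
      ∈ parts (spiesPK invKey pubK bad evs)) :
    msg.Nonce NA ∈ analz invKey (spiesPK invKey pubK bad evs) := by
  change partsP _ _ at h1 h2
  induction hevs with
  | Nil => obtain ⟨k, hk⟩ := parts_init h1; cases hk
  | Fake evs C X _ hX ih =>
    refine analz_mono' spies_sub ?_
    have e1 := (spies_cons h1).elim .inl (fake_crypt hX)
    have e2 := (spies_cons h2).elim .inl (fake_crypt hX)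
    rcases e1 with e1 | e1
    · rcases e2 with e2 | e2
      · exact ih e1 e2
      · exact synth_nonce (synth_fst (synth_snd e2))
    · exact synth_nonce (synth_fst e1)
  | NS1 evs C D N _ hN ih =>
    refine analz_mono' spies_sub ?_
    have e2 : partsP (spiesPK invKey pubK bad evs) _ := (spies_cons h2).resolve_right (by
      intro h
      rcases parts_crypt h with h | h
      · simp at h
      rcases parts_pair h with h | h | h
      · simp at h
      · simpa using parts_nonce h
      · simpa using parts_agent h)
    rcases spies_cons h1 with e1 | h
    · exact ih e1 e2
    · exfalso
      rcases parts_crypt h with h | h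
      · simp only [msg.Crypt.injEq, msg.MPair.injEq, msg.Nonce.injEq] at h
        obtain ⟨-, rfl, -⟩ := h
        exact hN (parts_mono' spies_used (.Fst _ _ (.Snd _ _ (.Body _ _ e2))))
      rcases parts_pair h with h | h | h
      · simp at h
      · simpa using parts_nonce h
      · simpa using parts_agent h
  | NS2 evs C C' D M N _ hN _ ih =>
    refine analz_mono' spies_sub ?_
    have e1 : partsP (spiesPK invKey pubK bad evs) _ := (spies_cons h1).resolve_right (by
      intro h
      rcases parts_crypt h with h | h
      · simp at h
      rcases parts_pair h with h | h | h
      · simp at h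
      · simpa using parts_nonce h
      rcases parts_pair h with h | h | h
      · simp at h
      · simpa using parts_nonce h
      · simpa using parts_agent h)
    rcases spies_cons h2 with e2 | h
    · exact ih e1 e2
    · exfalso
      rcases parts_crypt h with h | h
      · simp only [msg.Crypt.injEq, msg.MPair.injEq, msg.Nonce.injEq] at h
        obtain ⟨-, -, rfl, -⟩ := h
        exact hN (parts_mono' spies_used (.Fst _ _ (.Body _ _ e1)))
      rcases parts_pair h with h | h | h
      · simp at h
      · simpa using parts_nonce h
      rcases parts_pair h with h | h | h
      · simp at h
      · simpa using parts_nonce h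
      · simpa using parts_agent h
  | NS3 evs C D D' M N _ _ _ ih =>
    refine analz_mono' spies_sub (ih ?_ ?_)
    · refine (spies_cons h1).resolve_right fun h => ?_
      rcases parts_crypt h with h | h
      · simp at h
      · simpa using parts_nonce h
    · refine (spies_cons h2).resolve_right fun h => ?_
      rcases parts_crypt h with h | h
      · simp at h
      · simpa using parts_nonce h
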